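/- arXiv:1807.06101 — 2 statements merged into one kernel-verified Lean document; each statement's English description precedes it below -/
import Mathlib

section
/- For every q ∈ (2, ∞) there exists a constant a = a(q) > 0 such that the following holds. Let G be a d-regular graph (d ≥ 1) on a finite vertex set V, identified with its normalized adjacency matrix, let λ ∈ (0, 1) and δ > 0. If Φ_G(δ) > 1 − a·λ^{2q}, then ‖P_{≥λ}(G)‖_{2→q} ≤ 2/√δ. -/
open Finset

/-- The expectation `r`-norm of a function on a finite vertex set:
`(E_{x ∈ V} |f x|^r)^{1/r}`. -/
noncomputable def eNorm {V : Type} [Fintype V] (r : ℝ) (f : V → ℝ) : ℝ :=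
  ((∑ x, |f x| ^ r) / (Fintype.card V : ℝ)) ^ (1 / r)

/-- The number of (ordered) edge endpoints leaving `S`: the number of pairs
`(u, v)` with `u ∈ S`, `v ∉ S` and `u ~ v`. -/
def eBoundary {V : Type} [Fintype V] [DecidableEq V] (G : SimpleGraph V)
    [DecidableRel G.Adj] (S : Finset V) : ℕ :=
  (Finset.univ.filter fun p : V × V => p.1 ∈ S ∧ p.2 ∉ S ∧ G.Adj p.1 p.2).card

/-- The span of the eigenvectors of the normalized adjacency matrix of `G` with
eigenvalue at least `lam`. -/
noncomputable def topEigenspace {V : Type} [Fintype V] [DecidableEq V]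
    (G : SimpleGraph V) [DecidableRel G.Adj] (dreg : ℕ) (lam : ℝ) :
    Submodule ℝ (V → ℝ) :=
  Submodule.span ℝ {f : V → ℝ | ∃ c : ℝ, lam ≤ c ∧
    ((dreg : ℝ)⁻¹ • G.adjMatrix ℝ).mulVec f = c • f}

lemma layer_aux {V : Type} [Fintype V] [DecidableEq V] (A : V → V → ℝ) (κ : ℝ) :
    ∀ (n : ℕ) (w : V → ℝ), (∀ x, 0 ≤ w x) →
      (univ.filter fun x => w x ≠ 0).card ≤ n →
      (∀ S : Finset V, (∀ x ∈ S, w x ≠ 0) → ∑ x ∈ S, ∑ y ∈ S, A x y ≤ κ * S.card) →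
      ∑ x, ∑ y, A x y * min (w x) (w y) ≤ κ * ∑ x, w x := by
  intro n
  induction n with
  | zero =>
    intro w hw hc hS
    have h0 : ∀ x, w x = 0 := by
      intro x
      by_contra hx
      have : x ∈ univ.filter fun x => w x ≠ 0 := by simp [hx]
      have := Finset.card_pos.mpr ⟨x, this⟩
      omega
    simp [h0]
  | succ n ih =>
    intro w hw hc hS
    set S := univ.filter fun x => w x ≠ 0 with hSdef
    by_cases hne : S.Nonempty
    · obtain ⟨v, hv, hmin⟩ := S.exists_min_image w hne
      have hmem : ∀ x, x ∈ S ↔ w x ≠ 0 := by intro x; simp [hSdef]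
      let w' : V → ℝ := fun x => w x - if x ∈ S then w v else 0
      have hw'S : ∀ x, w' x ≠ 0 → x ∈ S := by
        intro x hx
        by_contra h
        have : w x = 0 := by
          by_contra h2
          exact h ((hmem x).2 h2)
        exact hx (by simp [w', h, this])
      have h1 := ih w' ?_ ?_ ?_
      · have hsplit : ∀ x y, A x y * min (w x) (w y) =
            A x y * min (w' x) (w' y) +
              (if x ∈ S then (if y ∈ S then w v * A x y else 0) else 0) := by
          intro x y
          have hz : ∀ z, z ∉ S → w z = 0 := by
            intro z h
            by_contra h2
            exact h ((hmem z).2 h2)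
          by_cases hx : x ∈ S <;> by_cases hy : y ∈ S
          · simp only [w', hx, hy, if_true]
            rw [min_sub_sub_right]; ring
          · have := hmin x hx
            simp [w', hx, hy, hz y hy, hw x, this]
          · have := hmin y hy
            simp [w', hx, hy, hz x hx, hw y, this]
          · simp [w', hx, hy, hz x hx, hz y hy]
        have hsum : ∑ x, w x = ∑ x, w' x + w v * S.card := by
          simp only [w', Finset.sum_sub_distrib]
          simp [Finset.sum_ite_mem]
          ring
        have hSS := hS S (fun x hx => (hmem x).1 hx)
        simp only [hsplit, Finset.sum_add_distrib]
        have : ∑ x, ∑ y, (if x ∈ S then (if y ∈ S then w v * A x y else 0) else 0)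
            = w v * ∑ x ∈ S, ∑ y ∈ S, A x y := by
          rw [Finset.mul_sum]
          simp only [Finset.mul_sum]
          rw [← Finset.sum_filter_add_sum_filter_not univ (fun x => x ∈ S)]
          have e2 : ∑ x ∈ univ.filter (fun x => ¬ x ∈ S),
              ∑ y, (if x ∈ S then (if y ∈ S then w v * A x y else 0) else 0) = 0 := by
            apply Finset.sum_eq_zero
            intro x hx
            have : x ∉ S := (Finset.mem_filter.1 hx).2
            simp [this]
          rw [e2, add_zero]
          apply Finset.sum_congr
          · ext x; simp
          · intro x hx
            simp [hx, Finset.sum_ite_mem]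
        rw [this, hsum]
        nlinarith [mul_le_mul_of_nonneg_left hSS (hw v)]
      · intro x
        by_cases hx : x ∈ S
        · simp [w', hx, hmin x hx]
        · simp [w', hx, hw x]
      · have hsub : (univ.filter fun x => w' x ≠ 0) ⊆ S.erase v := by
          intro x hx
          have hx' : w' x ≠ 0 := (Finset.mem_filter.1 hx).2
          refine Finset.mem_erase.2 ⟨?_, hw'S x hx'⟩
          rintro rfl
          exact hx' (by simp [w', hv])
        have := Finset.card_le_card hsub
        rw [Finset.card_erase_of_mem hv] at this
        omega
      · intro T hT
        exact hS T (fun x hx => (hmem x).1 (hw'S x (hT x hx)))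
    · apply ih w hw _ hS
      rw [Finset.not_nonempty_iff_eq_empty] at hne
      rw [← hSdef, hne]
      simp

lemma dense_aux {V : Type} [Fintype V] [DecidableEq V] (A : V → V → ℝ)
    (hsymm : ∀ x y, A x y = A y x) (hA : ∀ x y, 0 ≤ A x y) :
    ∀ j : ℕ, j + 2 ≤ Fintype.card V → ∃ S : Finset V, S.card + j = Fintype.card V ∧
      (∑ x, ∑ y, A x y) * ((S.card : ℝ) * (S.card - 1)) ≤
      (∑ x ∈ S, ∑ y ∈ S, A x y) * ((Fintype.card V : ℝ) * (Fintype.card V - 1)) := by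
  intro j
  induction j with
  | zero =>
    intro h
    exact ⟨univ, by simp, by simp⟩
  | succ j ih =>
    intro h
    obtain ⟨S, hc, hS⟩ := ih (by omega)
    have hne : S.Nonempty := Finset.card_pos.1 (by omega)
    obtain ⟨v, hv, hmin⟩ := S.exists_min_image (fun x => ∑ y ∈ S, A x y) hne
    have hcard : (S.erase v).card + 1 = S.card := Finset.card_erase_add_one hv
    refine ⟨S.erase v, by omega, ?_⟩
    have hdeg : (S.card : ℝ) * ∑ y ∈ S, A v y ≤ ∑ x ∈ S, ∑ y ∈ S, A x y := by
      have := Finset.card_nsmul_le_sum S (fun x => ∑ y ∈ S, A x y) _ hmin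
      simpa using this
    have e1 : ∑ x ∈ S, ∑ y ∈ S, A x y =
        ∑ x ∈ S.erase v, ∑ y ∈ S.erase v, A x y + 2 * ∑ y ∈ S, A v y - A v v := by
      rw [← Finset.add_sum_erase S _ hv]
      have : ∀ x, ∑ y ∈ S, A x y = A x v + ∑ y ∈ S.erase v, A x y := fun x =>
        (Finset.add_sum_erase S _ hv).symm
      simp only [this, Finset.sum_add_distrib]
      have : ∑ x ∈ S.erase v, A x v = ∑ x ∈ S.erase v, A v x :=
        Finset.sum_congr rfl (fun x _ => hsymm x v)
      rw [this]; ring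
    set E := ∑ x ∈ S, ∑ y ∈ S, A x y
    set E' := ∑ x ∈ S.erase v, ∑ y ∈ S.erase v, A x y
    set D := ∑ y ∈ S, A v y
    set T := ∑ x, ∑ y, A x y
    have hs : (S.card : ℝ) = ((S.erase v).card : ℝ) + 1 := by exact_mod_cast hcard.symm
    have hs2 : (2:ℝ) ≤ ((S.erase v).card : ℝ) := by
      have : 2 ≤ (S.erase v).card := by omega
      exact_mod_cast this
    set s := ((S.erase v).card : ℝ)
    rw [hs] at hS hdeg
    have hn : (2:ℝ) ≤ (Fintype.card V : ℝ) := by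
      have : 2 ≤ Fintype.card V := by omega
      exact_mod_cast this
    set N := (Fintype.card V : ℝ) * (Fintype.card V - 1)
    have hN : 0 ≤ N := mul_nonneg (by linarith) (by linarith)
    have h1 : (s - 1) * E ≤ (s + 1) * E' := by
      have := hA v v
      nlinarith
    have h2 : (s + 1) * (T * (s * (s - 1))) ≤ (s + 1) * (E' * N) := by
      nlinarith [mul_le_mul_of_nonneg_right h1 hN, mul_le_mul_of_nonneg_left hS (by linarith : 0 ≤ s - 1)]
    exact le_of_mul_le_mul_left h2 (by linarith)

lemma eig_inv {V : Type} [Fintype V] [DecidableEq V]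
    (G : SimpleGraph V) [DecidableRel G.Adj] (dreg : ℕ) (lam : ℝ) (hl : 0 < lam)
    (f : V → ℝ) (hf : f ∈ topEigenspace G dreg lam) :
    ∃ g ∈ topEigenspace G dreg lam,
      ((dreg : ℝ)⁻¹ • G.adjMatrix ℝ).mulVec g = f ∧
      lam ^ 2 * ∑ x, g x ^ 2 ≤ ∑ x, f x ^ 2 := by
  set M : Matrix V V ℝ := (dreg : ℝ)⁻¹ • G.adjMatrix ℝ with hM
  have hMsymm : M.transpose = M := by
    rw [hM, Matrix.transpose_smul, SimpleGraph.transpose_adjMatrix]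
  have key : ∃ (s : Finset ℝ) (v : ℝ → V → ℝ), (∀ c ∈ s, lam ≤ c) ∧
      (∀ c, M.mulVec (v c) = c • v c) ∧ f = ∑ c ∈ s, v c := by
    unfold topEigenspace at hf
    induction hf using Submodule.span_induction with
    | mem x hx =>
      obtain ⟨c, hc, hx⟩ := hx
      refine ⟨{c}, fun c' => if c' = c then x else 0, by simpa using hc, ?_, by simp⟩
      intro c'
      by_cases h : c' = c
      · subst h; simpa using hx
      · simp [h]
    | zero => exact ⟨∅, fun _ => 0, by simp, by simp, by simp⟩
    | add x y _ _ hx hy =>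
      obtain ⟨s, v, h1, h2, h3⟩ := hx
      obtain ⟨t, u, k1, k2, k3⟩ := hy
      refine ⟨s ∪ t, fun c => (if c ∈ s then v c else 0) + (if c ∈ t then u c else 0), ?_, ?_, ?_⟩
      · intro c hc
        rcases Finset.mem_union.1 hc with h | h
        · exact h1 c h
        · exact k1 c h
      · intro c
        rw [Matrix.mulVec_add, smul_add]
        congr 1
        · split_ifs <;> simp [h2]
        · split_ifs <;> simp [k2]
      · rw [Finset.sum_add_distrib, h3, k3]
        congr 1
        · rw [Finset.sum_ite_mem, Finset.inter_eq_right.2 Finset.subset_union_left]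
        · rw [Finset.sum_ite_mem, Finset.inter_eq_right.2 Finset.subset_union_right]
    | smul a x _ hx =>
      obtain ⟨s, v, h1, h2, h3⟩ := hx
      refine ⟨s, fun c => a • v c, h1, ?_, ?_⟩
      · intro c
        rw [Matrix.mulVec_smul, h2, smul_comm]
      · rw [h3, Finset.smul_sum]
  obtain ⟨s, v, hs, hv, rfl⟩ := key
  have hpos : ∀ c ∈ s, 0 < c := fun c hc => lt_of_lt_of_le hl (hs c hc)
  have horth : ∀ c c', c ≠ c' → ∑ x, v c x * v c' x = 0 := by
    intro c c' hcc
    have h1 : (M.mulVec (v c)) ⬝ᵥ (v c') = (v c) ⬝ᵥ (M.mulVec (v c')) := by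
      rw [Matrix.dotProduct_mulVec, ← Matrix.mulVec_transpose, hMsymm]
    rw [hv, hv, smul_dotProduct, dotProduct_smul] at h1
    have h2 : (c - c') * (v c ⬝ᵥ v c') = 0 := by
      simp only [smul_eq_mul] at h1
      linarith
    rcases mul_eq_zero.1 h2 with h | h
    · exact absurd (sub_eq_zero.1 h) hcc
    · exact h
  have hpyth : ∀ b : ℝ → ℝ, ∑ x, (∑ c ∈ s, b c • v c) x ^ 2 = ∑ c ∈ s, b c ^ 2 * ∑ x, v c x ^ 2 := by
    intro b
    have : ∀ x, (∑ c ∈ s, b c • v c) x ^ 2 =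
        ∑ c ∈ s, ∑ c' ∈ s, (b c * b c') * (v c x * v c' x) := by
      intro x
      rw [Finset.sum_apply, sq, Finset.sum_mul_sum]
      refine Finset.sum_congr rfl fun c _ => Finset.sum_congr rfl fun c' _ => ?_
      simp only [Pi.smul_apply, smul_eq_mul]; ring
    simp only [this]
    rw [Finset.sum_comm]
    refine Finset.sum_congr rfl fun c hc => ?_
    rw [Finset.sum_comm]
    rw [Finset.sum_eq_single c]
    · rw [← Finset.mul_sum]
      simp only [sq]
    · intro c' _ hne
      rw [← Finset.mul_sum, horth c c' (Ne.symm hne), mul_zero]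
    · intro h; exact absurd hc h
  refine ⟨∑ c ∈ s, c⁻¹ • v c, ?_, ?_, ?_⟩
  · refine Submodule.sum_mem _ fun c hc => Submodule.smul_mem _ _ (Submodule.subset_span ⟨c, hs c hc, hv c⟩)
  · rw [Matrix.mulVec_sum]
    refine Finset.sum_congr rfl fun c hc => ?_
    rw [Matrix.mulVec_smul, hv, smul_smul, inv_mul_cancel₀ (hpos c hc).ne', one_smul]
  · rw [hpyth]
    have := hpyth (fun _ => 1)
    simp only [one_smul] at this
    rw [this, Finset.mul_sum]
    refine Finset.sum_le_sum fun c hc => ?_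
    rw [← mul_assoc]
    refine mul_le_mul_of_nonneg_right ?_ (Finset.sum_nonneg fun x _ => sq_nonneg _)
    rw [one_pow, ← mul_pow]
    have : lam * c⁻¹ ≤ 1 := by
      rw [← div_eq_mul_inv]; exact (div_le_one (hpos c hc)).2 (hs c hc)
    exact pow_le_one₀ (mul_nonneg hl.le (inv_nonneg.2 (hpos c hc).le)) this

lemma young_aux (q : ℝ) (hq : 2 < q) (θ : ℝ) (h0 : 0 < θ) (h1 : θ ≤ 1) (a b : ℝ)
    (ha : 0 ≤ a) (hb : 0 ≤ b) :
    a ^ (q - 1) * b ≤ θ * (a ^ q + b ^ q) + θ ^ (1 - q) * min (a ^ q) (b ^ q) := by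
  have haq : 0 ≤ a ^ q := Real.rpow_nonneg ha q
  have hbq : 0 ≤ b ^ q := Real.rpow_nonneg hb q
  have hmin : 0 ≤ θ ^ (1 - q) * min (a ^ q) (b ^ q) :=
    mul_nonneg (Real.rpow_nonneg h0.le _) (le_min haq hbq)
  have ea : ∀ c : ℝ, 0 ≤ c → c ^ (q - 1) * c = c ^ q := by
    intro c hc
    have := Real.rpow_add_one' hc (y := q - 1) (by linarith)
    rw [← this]; congr 1; ring
  have hθ : θ ^ (q - 1) ≤ θ := by
    have := Real.rpow_le_rpow_of_exponent_ge h0 h1 (by linarith : (1:ℝ) ≤ q - 1)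
    simpa using this
  have hinv : θ ^ (1 - q) * θ ^ (q - 1) = 1 := by
    rw [← Real.rpow_add h0]; simp
  have ht : 0 < θ ^ (1 - q) := Real.rpow_pos_of_pos h0 _
  have haq1 : 0 ≤ a ^ (q - 1) := Real.rpow_nonneg ha _
  rcases le_total b (θ * a) with h | h
  · have : a ^ (q - 1) * b ≤ θ * a ^ q := by
      calc a ^ (q - 1) * b ≤ a ^ (q - 1) * (θ * a) := by gcongr
        _ = θ * a ^ q := by rw [← ea a ha]; ring
    nlinarith
  · rcases le_total a (θ * b) with h' | h'
    · have : a ^ (q - 1) * b ≤ θ * b ^ q := by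
        calc a ^ (q - 1) * b ≤ (θ * b) ^ (q - 1) * b := by
              gcongr; linarith
          _ = θ ^ (q - 1) * b ^ q := by rw [Real.mul_rpow h0.le hb, mul_assoc, ea b hb]
          _ ≤ θ * b ^ q := by gcongr
      nlinarith
    · have hm : a ^ (q - 1) * b ≤ θ ^ (1 - q) * min (a ^ q) (b ^ q) := by
        rw [mul_min_of_nonneg _ _ ht.le]
        refine le_min ?_ ?_
        · have : b ≤ θ ^ (1 - q) * a := by
            calc b = θ ^ (1 - q) * (θ ^ (q - 1) * b) := by rw [← mul_assoc, hinv, one_mul]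
              _ ≤ θ ^ (1 - q) * (θ * b) := by gcongr
              _ ≤ θ ^ (1 - q) * a := by gcongr
          calc a ^ (q - 1) * b ≤ a ^ (q - 1) * (θ ^ (1 - q) * a) := by gcongr
            _ = θ ^ (1 - q) * a ^ q := by rw [← ea a ha]; ring
        · have : θ ^ (q - 1) * a ^ (q - 1) ≤ b ^ (q - 1) := by
            rw [← Real.mul_rpow h0.le ha]
            exact Real.rpow_le_rpow (mul_nonneg h0.le ha) h (by linarith)
          calc a ^ (q - 1) * b = θ ^ (1 - q) * (θ ^ (q - 1) * a ^ (q - 1)) * b := by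
                rw [← mul_assoc, hinv, one_mul]
            _ ≤ θ ^ (1 - q) * b ^ (q - 1) * b := by gcongr
            _ = θ ^ (1 - q) * b ^ q := by rw [mul_assoc, ea b hb]
      nlinarith [mul_nonneg h0.le haq, mul_nonneg h0.le hbq]

lemma core_aux {V : Type} [Fintype V] [DecidableEq V] (A : V → V → ℝ)
    (hsymm : ∀ x y, A x y = A y x) (hA : ∀ x y, 0 ≤ A x y)
    (d : ℝ) (hd : 0 < d) (hrow : ∀ x, ∑ y, A x y = d)
    (q : ℝ) (hq : 2 < q) (lam δ η n : ℝ) (hl : 0 < lam) (hl1 : lam < 1) (hδ : 0 < δ)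
    (hn : 0 < n) (hη : η = (32:ℝ) ^ (-q) * lam ^ (2 * q)) (hδη : δ ≤ 2 * η)
    (f g : V → ℝ) (hfg : ∀ x, d * f x = ∑ y, A x y * g y)
    (hf2 : ∑ x, f x ^ 2 = n) (hg2 : lam ^ 2 * ∑ x, g x ^ 2 ≤ n)
    (hgq : lam ^ q * ∑ x, |g x| ^ q ≤ ∑ x, |f x| ^ q)
    (hexp : ∀ S : Finset V, (S.card : ℝ) ≤ δ * n → ∑ x ∈ S, ∑ y ∈ S, A x y ≤ η * d * S.card)
    (hM : n * (4 / δ) ^ (q / 2) < ∑ x, |f x| ^ q) : False := by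
  set M := ∑ x, |f x| ^ q with hMdef
  have hM0 : 0 < M := lt_of_le_of_lt (by positivity) hM
  have hη0 : 0 < η := by rw [hη]; positivity
  set h : V → ℝ := fun x => max |f x| (lam * |g x|) with hh
  have hh0 : ∀ x, 0 ≤ h x := fun x => le_max_of_le_left (abs_nonneg _)
  have hfh : ∀ x, |f x| ≤ h x := fun x => le_max_left _ _
  have hgh : ∀ x, lam * |g x| ≤ h x := fun x => le_max_right _ _
  set r : ℝ := Real.sqrt (2 / δ) with hr
  have hr0 : 0 < r := Real.sqrt_pos.2 (by positivity)
  have hr2 : r ^ 2 = 2 / δ := Real.sq_sqrt (by positivity)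
  set w : V → ℝ := fun x => if r < h x then h x ^ q else 0 with hw
  have hw0 : ∀ x, 0 ≤ w x := by
    intro x; simp only [hw]; split_ifs
    · exact Real.rpow_nonneg (hh0 x) _
    · exact le_rfl
  have hh2 : ∑ x, h x ^ 2 ≤ 2 * n := by
    have : ∀ x, h x ^ 2 ≤ f x ^ 2 + lam ^ 2 * g x ^ 2 := by
      intro x
      rcases max_choice |f x| (lam * |g x|) with e | e
      · simp only [hh, e, sq_abs]; nlinarith [mul_nonneg (sq_nonneg lam) (sq_nonneg (g x))]
      · simp only [hh, e, mul_pow, sq_abs]; nlinarith [sq_nonneg (f x)]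
    calc ∑ x, h x ^ 2 ≤ ∑ x, (f x ^ 2 + lam ^ 2 * g x ^ 2) := Finset.sum_le_sum fun x _ => this x
      _ ≤ 2 * n := by rw [Finset.sum_add_distrib, ← Finset.mul_sum]; linarith
  have hwM : ∑ x, w x ≤ 2 * M := by
    have : ∀ x, w x ≤ |f x| ^ q + lam ^ q * |g x| ^ q := by
      intro x
      have p1 : 0 ≤ |f x| ^ q := by positivity
      have p2 : 0 ≤ lam ^ q * |g x| ^ q := by positivity
      simp only [hw]
      split_ifs
      · rcases max_choice |f x| (lam * |g x|) with e | e
        · simp only [hh, e]; linarith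
        · simp only [hh, e]
          rw [Real.mul_rpow hl.le (abs_nonneg _)]; linarith
      · linarith
    calc ∑ x, w x ≤ ∑ x, (|f x| ^ q + lam ^ q * |g x| ^ q) := Finset.sum_le_sum fun x _ => this x
      _ ≤ 2 * M := by rw [Finset.sum_add_distrib, ← Finset.mul_sum]; linarith
  have hlayer : ∑ x, ∑ y, A x y * min (w x) (w y) ≤ η * d * ∑ x, w x := by
    apply layer_aux A (η * d) _ w hw0 le_rfl
    intro S hS
    apply hexp
    have hS' : ∀ x ∈ S, r < h x := by
      intro x hx
      by_contra hc
      exact hS x hx (by simp [hw, hc])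
    have h1 : (S.card : ℝ) * r ^ 2 ≤ 2 * n := by
      calc (S.card : ℝ) * r ^ 2 = ∑ x ∈ S, r ^ 2 := by simp
        _ ≤ ∑ x ∈ S, h x ^ 2 := Finset.sum_le_sum fun x hx =>
            pow_le_pow_left₀ hr0.le (hS' x hx).le 2
        _ ≤ ∑ x, h x ^ 2 := Finset.sum_le_sum_of_subset_of_nonneg (Finset.subset_univ _)
            fun x _ _ => sq_nonneg _
        _ ≤ 2 * n := hh2
    rw [hr2] at h1
    have : (S.card : ℝ) * (2 / δ) * δ = S.card * 2 := by field_simp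
    nlinarith
  set τ : ℝ := 4 * r / lam with hτ
  have hτ0 : 0 < τ := by positivity
  have hrτ : r ≤ τ := by
    rw [hτ, le_div_iff₀ hl]; nlinarith
  set θ : ℝ := lam / 32 with hθ
  have hθ0 : 0 < θ := by positivity
  have hθ1 : θ ≤ 1 := by rw [hθ]; linarith
  set K : V → V → ℝ := fun x y => θ * (w x + w y) + θ ^ (1 - q) * min (w x) (w y) with hK
  have hK0 : ∀ x y, 0 ≤ K x y := by
    intro x y
    have := hw0 x
    have := hw0 y
    have : 0 ≤ min (w x) (w y) := le_min (hw0 x) (hw0 y)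
    simp only [hK]; positivity
  have ea : ∀ c : ℝ, 0 ≤ c → c ^ (q - 1) * c = c ^ q := by
    intro c hc
    have := Real.rpow_add_one' hc (y := q - 1) (by linarith)
    rw [← this]; congr 1; ring
  have hpt : ∀ x, d * |f x| ^ q ≤ d * (τ ^ (q - 2) * f x ^ 2) + d * |f x| ^ q / 4 +
      lam⁻¹ * ∑ y, A x y * K x y := by
    intro x
    have hS0 : 0 ≤ lam⁻¹ * ∑ y, A x y * K x y :=
      mul_nonneg (by positivity) (Finset.sum_nonneg fun y _ => mul_nonneg (hA x y) (hK0 x y))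
    have hfq : 0 ≤ |f x| ^ q := by positivity
    rcases le_or_gt |f x| τ with hc | hc
    · have h1 : |f x| ^ q ≤ τ ^ (q - 2) * f x ^ 2 := by
        have e : |f x| ^ q = |f x| ^ (q - 2) * f x ^ 2 := by
          have := Real.rpow_add_natCast' (abs_nonneg (f x)) (y := q - 2) (n := 2)
            (by push_cast; linarith)
          rw [sq_abs] at this
          rw [← this]; congr 1; push_cast; ring
        rw [e]
        gcongr
      have := mul_le_mul_of_nonneg_left h1 hd.le
      have : 0 ≤ d * |f x| ^ q / 4 := by positivity
      linarith
    · have h2 : d * |f x| ≤ ∑ y, A x y * |g y| := by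
        calc d * |f x| = |d * f x| := by rw [abs_mul, abs_of_pos hd]
          _ = |∑ y, A x y * g y| := by rw [hfg]
          _ ≤ ∑ y, |A x y * g y| := Finset.abs_sum_le_sum_abs _ _
          _ = ∑ y, A x y * |g y| := Finset.sum_congr rfl fun y _ => by
              rw [abs_mul, abs_of_nonneg (hA x y)]
      have h3 : ∀ y, |f x| ^ (q - 1) * |g y| ≤ |f x| ^ q / 4 + lam⁻¹ * K x y := by
        intro y
        have hKy : 0 ≤ lam⁻¹ * K x y := mul_nonneg (by positivity) (hK0 x y)
        rcases le_or_gt (h y) r with hy | hy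
        · have : |g y| ≤ |f x| / 4 := by
            have h5 : lam * |g y| ≤ r := (hgh y).trans hy
            have h6 : |g y| ≤ r / lam := by rw [le_div_iff₀ hl]; linarith
            have h7 : τ = 4 * (r / lam) := by rw [hτ]; ring
            linarith
          have : |f x| ^ (q - 1) * |g y| ≤ |f x| ^ (q - 1) * (|f x| / 4) := by gcongr
          have e := ea |f x| (abs_nonneg _)
          linarith
        · have hx : r < h x := lt_of_le_of_lt hrτ (lt_of_lt_of_le hc (hfh x))
          have hyo := young_aux q hq θ hθ0 hθ1 (h x) (h y) (hh0 x) (hh0 y)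
          have eK : K x y = θ * (h x ^ q + h y ^ q) + θ ^ (1 - q) * min (h x ^ q) (h y ^ q) := by
            simp only [hK, hw, hx, hy, if_true]
          rw [← eK] at hyo
          have h8 : |f x| ^ (q - 1) * (lam * |g y|) ≤ K x y := by
            refine le_trans ?_ hyo
            have : |f x| ^ (q - 1) ≤ h x ^ (q - 1) :=
              Real.rpow_le_rpow (abs_nonneg _) (hfh x) (by linarith)
            exact mul_le_mul this (hgh y) (by positivity) (Real.rpow_nonneg (hh0 x) _)
          have h9 : |f x| ^ (q - 1) * |g y| = lam⁻¹ * (|f x| ^ (q - 1) * (lam * |g y|)) := by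
            field_simp
          rw [h9]
          have : lam⁻¹ * (|f x| ^ (q - 1) * (lam * |g y|)) ≤ lam⁻¹ * K x y := by gcongr
          have : 0 ≤ |f x| ^ q / 4 := by positivity
          linarith
      have h4 : d * |f x| ^ q ≤ d * |f x| ^ q / 4 + lam⁻¹ * ∑ y, A x y * K x y := by
        calc d * |f x| ^ q = |f x| ^ (q - 1) * (d * |f x|) := by
              rw [← ea |f x| (abs_nonneg _)]; ring
          _ ≤ |f x| ^ (q - 1) * ∑ y, A x y * |g y| := by gcongr
          _ = ∑ y, A x y * (|f x| ^ (q - 1) * |g y|) := by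
              rw [Finset.mul_sum]; exact Finset.sum_congr rfl fun y _ => by ring
          _ ≤ ∑ y, A x y * (|f x| ^ q / 4 + lam⁻¹ * K x y) :=
              Finset.sum_le_sum fun y _ => mul_le_mul_of_nonneg_left (h3 y) (hA x y)
          _ = (∑ y, A x y) * (|f x| ^ q / 4) + lam⁻¹ * ∑ y, A x y * K x y := by
              rw [Finset.sum_mul, Finset.mul_sum, ← Finset.sum_add_distrib]
              exact Finset.sum_congr rfl fun y _ => by ring
          _ = _ := by rw [hrow]; ring
      have : 0 ≤ d * (τ ^ (q - 2) * f x ^ 2) := by positivity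
      linarith
  have hsumK : ∑ x, ∑ y, A x y * K x y ≤ θ * (2 * d * ∑ x, w x) + θ ^ (1 - q) * (η * d * ∑ x, w x) := by
    have e1 : ∑ x, ∑ y, A x y * w x = d * ∑ x, w x := by
      rw [Finset.mul_sum]
      refine Finset.sum_congr rfl fun x _ => ?_
      rw [← Finset.sum_mul, hrow]
    have e2 : ∑ x, ∑ y, A x y * w y = d * ∑ x, w x := by
      rw [Finset.sum_comm, ← e1]
      exact Finset.sum_congr rfl fun x _ => Finset.sum_congr rfl fun y _ => by rw [hsymm]
    have e3 : ∑ x, ∑ y, A x y * K x y = θ * (∑ x, ∑ y, A x y * w x + ∑ x, ∑ y, A x y * w y)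
        + θ ^ (1 - q) * ∑ x, ∑ y, A x y * min (w x) (w y) := by
      simp only [Finset.mul_sum, ← Finset.sum_add_distrib, hK]
      exact Finset.sum_congr rfl fun x _ => Finset.sum_congr rfl fun y _ => by ring
    rw [e3, e1, e2]
    have : θ ^ (1 - q) * ∑ x, ∑ y, A x y * min (w x) (w y) ≤ θ ^ (1 - q) * (η * d * ∑ x, w x) := by
      gcongr
    linarith
  have htot : d * M ≤ d * (τ ^ (q - 2) * n) + d * M / 4 + lam⁻¹ * ∑ x, ∑ y, A x y * K x y := by
    calc d * M = ∑ x, d * |f x| ^ q := by rw [hMdef, Finset.mul_sum]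
      _ ≤ ∑ x, (d * (τ ^ (q - 2) * f x ^ 2) + d * |f x| ^ q / 4 + lam⁻¹ * ∑ y, A x y * K x y) :=
          Finset.sum_le_sum fun x _ => hpt x
      _ = _ := by
          rw [Finset.sum_add_distrib, Finset.sum_add_distrib, ← Finset.mul_sum, ← Finset.mul_sum,
            ← Finset.mul_sum, hf2, ← Finset.sum_div, ← Finset.mul_sum]
  have hlq : lam ^ q ≤ 1 := Real.rpow_le_one hl.le hl1.le (by linarith)
  have hθη : lam⁻¹ * (θ ^ (1 - q) * η) ≤ 1 / 32 := by
    have e : lam⁻¹ * (θ ^ (1 - q) * η) = lam ^ q * (1 / 32) := by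
      rw [hθ, hη, Real.div_rpow hl.le (by norm_num), Real.rpow_neg (by norm_num),
        show (1 - q) = 1 + -q by ring, Real.rpow_add hl, Real.rpow_add (by norm_num),
        Real.rpow_one, Real.rpow_one, Real.rpow_neg hl.le, Real.rpow_neg (by norm_num),
        show 2 * q = q + q by ring, Real.rpow_add hl]
      have : lam ^ q ≠ 0 := (Real.rpow_pos_of_pos hl q).ne'
      have : (32:ℝ) ^ q ≠ 0 := by positivity
      field_simp
    rw [e]; linarith
  have hK2 : lam⁻¹ * ∑ x, ∑ y, A x y * K x y ≤ d * M * (3 / 16) := by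
    have h1 : lam⁻¹ * ∑ x, ∑ y, A x y * K x y ≤
        lam⁻¹ * (θ * (2 * d * ∑ x, w x) + θ ^ (1 - q) * (η * d * ∑ x, w x)) := by gcongr
    have h2 : lam⁻¹ * (θ * (2 * d * ∑ x, w x) + θ ^ (1 - q) * (η * d * ∑ x, w x)) =
       (1 / 16 + lam⁻¹ * (θ ^ (1 - q) * η)) * (d * ∑ x, w x) := by
      have : lam⁻¹ * θ = 1 / 32 := by rw [hθ]; field_simp
      linear_combination (2 * d * ∑ x, w x) * this
    rw [h2] at h1
    have hs0 : 0 ≤ ∑ x, w x := Finset.sum_nonneg fun x _ => hw0 x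
    have h3 : (1 / 16 + lam⁻¹ * (θ ^ (1 - q) * η)) * (d * ∑ x, w x) ≤ (1 / 16 + 1 / 32) * (d * (2 * M)) := by
      gcongr
    linarith
  have hτM : τ ^ (q - 2) * n ≤ M / 4 := by
    have e1 : τ ^ (q - 2) = (32 / (lam ^ 2 * δ)) ^ (q / 2 - 1) := by
      have : τ ^ 2 = 32 / (lam ^ 2 * δ) := by
        rw [hτ, div_pow, mul_pow, hr2]; field_simp; norm_num
      rw [← this, ← Real.rpow_natCast, ← Real.rpow_mul hτ0.le]
      congr 1; push_cast; ring
    have e2 : (4 / δ) ^ (q / 2) = (4 / δ) ^ (q / 2 - 1) * (4 / δ) := by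
      have := Real.rpow_add_one (x := 4 / δ) (by positivity) (q / 2 - 1)
      rw [← this]; congr 1; ring
    have e3 : (32 / (lam ^ 2 * δ)) ^ (q / 2 - 1) = (8 / lam ^ 2) ^ (q / 2 - 1) * (4 / δ) ^ (q / 2 - 1) := by
      rw [← Real.mul_rpow (by positivity) (by positivity)]
      congr 1; field_simp; norm_num
    have e4 : (8 / lam ^ 2) ^ (q / 2 - 1) * δ ≤ 1 := by
      have p1 : (8 / lam ^ 2) ^ (q / 2 - 1) ≤ (32:ℝ) ^ q / (2 * lam ^ (2 * q)) := by
        rw [Real.div_rpow (by norm_num) (by positivity)]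
        have a1 : (8:ℝ) ^ (q / 2 - 1) * 2 ≤ (32:ℝ) ^ q := by
          calc (8:ℝ) ^ (q / 2 - 1) * 2 ≤ (32:ℝ) ^ (q / 2 - 1) * 32 := by
                gcongr
                · linarith
                · norm_num
                · norm_num
            _ = (32:ℝ) ^ (q / 2) := by
                rw [← Real.rpow_add_one (by norm_num)]; congr 1; ring
            _ ≤ (32:ℝ) ^ q := Real.rpow_le_rpow_of_exponent_le (by norm_num) (by linarith)
        have a2 : lam ^ (2 * q) ≤ (lam ^ 2) ^ (q / 2 - 1) := by
          rw [← Real.rpow_natCast, ← Real.rpow_mul hl.le]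
          apply Real.rpow_le_rpow_of_exponent_ge hl hl1.le
          push_cast; linarith
        have : 0 < lam ^ (2 * q) := Real.rpow_pos_of_pos hl _
        rw [div_le_div_iff₀ (by positivity) (by positivity)]
        calc (8:ℝ) ^ (q / 2 - 1) * (2 * lam ^ (2 * q)) = ((8:ℝ) ^ (q / 2 - 1) * 2) * lam ^ (2 * q) := by ring
          _ ≤ _ := by gcongr
      have p2 : δ ≤ 2 * ((32:ℝ) ^ (-q) * lam ^ (2 * q)) := by rw [← hη]; exact hδη
      calc (8 / lam ^ 2) ^ (q / 2 - 1) * δ ≤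
          (32:ℝ) ^ q / (2 * lam ^ (2 * q)) * (2 * ((32:ℝ) ^ (-q) * lam ^ (2 * q))) := by gcongr
        _ = 1 := by
          rw [Real.rpow_neg (by norm_num)]
          have : lam ^ (2 * q) ≠ 0 := (Real.rpow_pos_of_pos hl _).ne'
          have : (32:ℝ) ^ q ≠ 0 := by positivity
          field_simp
    rw [e1, e3]
    set X := (8 / lam ^ 2) ^ (q / 2 - 1)
    set Y := (4 / δ) ^ (q / 2 - 1) with hY
    have hY0 : 0 ≤ Y := by positivity
    have hX : X ≤ 1 / δ := by rw [le_div_iff₀ hδ]; exact e4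
    have : X * Y * n ≤ (1 / δ) * Y * n := by gcongr
    rw [e2] at hM
    have : n * (Y * (4 / δ)) = 4 * ((1 / δ) * Y * n) := by ring
    linarith
  have hfin : d * (τ ^ (q - 2) * n) ≤ d * (M / 4) := by gcongr
  nlinarith [mul_pos hd hM0]

lemma adj_aux {V : Type} [Fintype V] [DecidableEq V]
    (G : SimpleGraph V) [DecidableRel G.Adj] (dreg : ℕ) (hd : 1 ≤ dreg)
    (hreg : G.IsRegularOfDegree dreg) (η : ℝ) (S : Finset V) (hS : S.Nonempty)
    (h : 1 - η < (eBoundary G S : ℝ) / ((dreg : ℝ) * S.card)) :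
    ∑ x ∈ S, ∑ y ∈ S, G.adjMatrix ℝ x y ≤ η * dreg * S.card := by
  have hrow : ∀ x, ∑ y, G.adjMatrix ℝ x y = dreg := by
    intro x
    have := hreg x
    simp [SimpleGraph.adjMatrix_apply, ← this, SimpleGraph.card_neighborFinset_eq_degree,
      Finset.sum_boole, ← SimpleGraph.neighborFinset_eq_filter]
  have hb : (eBoundary G S : ℝ) = ∑ x ∈ S, ∑ y ∈ Sᶜ, G.adjMatrix ℝ x y := by
    simp only [SimpleGraph.adjMatrix_apply]
    rw [← Finset.sum_product' S Sᶜ (fun x y => if G.Adj x y then (1:ℝ) else 0)]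
    simp only [Finset.sum_boole, eBoundary]
    congr 2
    ext p
    simp [and_assoc]
  have hsum : ∑ x ∈ S, ∑ y ∈ S, G.adjMatrix ℝ x y + (eBoundary G S : ℝ) = dreg * S.card := by
    rw [hb, ← Finset.sum_add_distrib]
    simp only [Finset.sum_add_sum_compl, hrow]
    simp [mul_comm]
  have hc : (0:ℝ) < S.card := by exact_mod_cast Finset.card_pos.2 hS
  have hd' : (0:ℝ) < dreg := by exact_mod_cast hd
  rw [lt_div_iff₀ (by positivity)] at h
  linarith

lemma max_aux (q : ℝ) (hq : 2 < q)
        (V : Type) (_ : Fintype V) (_ : DecidableEq V) (_ : Nonempty V)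
        (G : SimpleGraph V) (_ : DecidableRel G.Adj)
        (dreg : ℕ) (hd : 1 ≤ dreg) (hreg : G.IsRegularOfDegree dreg)
      (lam δ : ℝ) (hl : 0 < lam) (hl1 : lam < 1) (hδ : 0 < δ)
      (hexp : ∀ S : Finset V, S.Nonempty → (S.card : ℝ) / (Fintype.card V : ℝ) ≤ δ →
          1 - (32:ℝ) ^ (-q) * lam ^ (2 * q) < (eBoundary G S : ℝ) / ((dreg : ℝ) * S.card))
      (f : V → ℝ) (hf : f ∈ topEigenspace G dreg lam) (hf2 : ∑ x, f x ^ 2 = Fintype.card V)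
      (hmax : ∀ g ∈ topEigenspace G dreg lam, ∑ x, g x ^ 2 = Fintype.card V →
        ∑ x, |g x| ^ q ≤ ∑ x, |f x| ^ q) :
      ∑ x, |f x| ^ q ≤ Fintype.card V * (4 / δ) ^ (q / 2) := by
  by_contra hM
  push Not at hM
  set η : ℝ := (32:ℝ) ^ (-q) * lam ^ (2 * q) with hη
  set n : ℝ := (Fintype.card V : ℝ) with hn
  have hn1 : (1:ℝ) ≤ n := by
    rw [hn]; exact_mod_cast Fintype.card_pos
  have hn0 : 0 < n := by linarith
  have hd' : (0:ℝ) < dreg := by exact_mod_cast hd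
  set A : V → V → ℝ := fun x y => G.adjMatrix ℝ x y with hAdef
  have hrow : ∀ x, ∑ y, A x y = dreg := by
    intro x
    have := hreg x
    simp [A, SimpleGraph.adjMatrix_apply, ← this, SimpleGraph.card_neighborFinset_eq_degree,
      Finset.sum_boole, ← SimpleGraph.neighborFinset_eq_filter]
  have hsymm : ∀ x y, A x y = A y x := by
    intro x y
    simp [A, SimpleGraph.adjMatrix_apply, G.adj_comm]
  have hA : ∀ x y, 0 ≤ A x y := by
    intro x y
    simp only [A, SimpleGraph.adjMatrix_apply]; split_ifs <;> norm_num
  have hexp' : ∀ S : Finset V, (S.card : ℝ) ≤ δ * n →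
      ∑ x ∈ S, ∑ y ∈ S, A x y ≤ η * dreg * S.card := by
    intro S hS
    rcases S.eq_empty_or_nonempty with rfl | hne
    · simp
    · exact adj_aux G dreg hd hreg η S hne (hexp S hne (by rwa [div_le_iff₀ hn0]))
  have hη1 : η < 1 := by
    have h1 : (32:ℝ) ^ (-q) < 1 := Real.rpow_lt_one_of_one_lt_of_neg (by norm_num) (by linarith)
    have h2 : lam ^ (2 * q) ≤ 1 := Real.rpow_le_one hl.le hl1.le (by linarith)
    have h3 : 0 < lam ^ (2 * q) := Real.rpow_pos_of_pos hl _
    rw [hη]; nlinarith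
  have hδ1 : δ < 1 := by
    by_contra hc
    push Not at hc
    have := hexp' univ (by rw [Finset.card_univ]; nlinarith)
    simp only [hrow, Finset.sum_const, nsmul_eq_mul, Finset.card_univ] at this
    rw [← hn] at this
    nlinarith [mul_pos hn0 hd']
  have hδn : 4 < δ * n := by
    have h1 : ∀ x, |f x| ^ q ≤ n ^ (q / 2 - 1) * f x ^ 2 := by
      intro x
      have e : |f x| ^ q = (f x ^ 2) ^ (q / 2 - 1) * f x ^ 2 := by
        rw [← Real.rpow_add_one' (sq_nonneg _) (by linarith), ← sq_abs, ← Real.rpow_natCast,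
          ← Real.rpow_mul (abs_nonneg _)]
        congr 1; push_cast; ring
      rw [e]
      have : f x ^ 2 ≤ n := by
        rw [← hf2]
        exact Finset.single_le_sum (f := fun x => f x ^ 2) (fun i _ => sq_nonneg _) (Finset.mem_univ x)
      gcongr
      linarith
    have h2 : ∑ x, |f x| ^ q ≤ n ^ (q / 2) := by
      calc ∑ x, |f x| ^ q ≤ ∑ x, n ^ (q / 2 - 1) * f x ^ 2 := Finset.sum_le_sum fun x _ => h1 x
        _ = n ^ (q / 2 - 1) * n := by rw [← Finset.mul_sum, hf2]
        _ = n ^ (q / 2) := by rw [← Real.rpow_add_one hn0.ne']; congr 1; ring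
    have h3 : (4 / δ) ^ (q / 2) < n ^ (q / 2) := by
      have : 0 ≤ (4 / δ) ^ (q / 2) := by positivity
      nlinarith
    have h4 : 4 / δ < n := (Real.rpow_lt_rpow_iff (by positivity) hn0.le (by linarith)).1 h3
    rw [div_lt_iff₀ hδ] at h4
    linarith
  have hδη : δ ≤ 2 * η := by
    set k := ⌊δ * n⌋₊ with hk
    have hk1 : (k : ℝ) ≤ δ * n := Nat.floor_le (by positivity)
    have hk2 : δ * n < k + 1 := Nat.lt_floor_add_one _
    have hkn : k < Fintype.card V := by
      have : (k : ℝ) < Fintype.card V := by rw [← hn]; nlinarith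
      exact_mod_cast this
    have hk4 : 4 ≤ k := Nat.le_floor (by push_cast; linarith)
    obtain ⟨S, hc, hS⟩ := dense_aux A hsymm hA (Fintype.card V - k) (by omega)
    have hSk : S.card = k := by omega
    rw [hSk] at hS
    have hE := hexp' S (by rw [hSk]; exact hk1)
    rw [hSk] at hE
    have hT : ∑ x, ∑ y, A x y = n * dreg := by
      simp [hrow, hn]
    rw [hT, ← hn] at hS
    have hk0 : (0:ℝ) < k := by
      have : 0 < k := by omega
      exact_mod_cast this
    have hn2 : 0 ≤ n * (n - 1) := mul_nonneg hn0.le (by linarith)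
    have h1 : n * dreg * (k * (k - 1)) ≤ (η * dreg * k) * (n * (n - 1)) :=
      hS.trans (mul_le_mul_of_nonneg_right hE hn2)
    have h2 : (n * dreg * k) * ((k:ℝ) - 1) ≤ (n * dreg * k) * (η * (n - 1)) := by
      linarith
    have h3 := le_of_mul_le_mul_left h2 (by positivity)
    have hη0 : 0 < η := by rw [hη]; positivity
    have h4 : δ * n ≤ 2 * η * n := by nlinarith
    exact le_of_mul_le_mul_right h4 hn0
  obtain ⟨g, hgT, hgf, hg2⟩ := eig_inv G dreg lam hl f hf
  rw [hf2] at hg2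
  have hfg : ∀ x, dreg * f x = ∑ y, A x y * g y := by
    intro x
    rw [← hgf, Matrix.smul_mulVec, Pi.smul_apply, smul_eq_mul, ← mul_assoc,
      mul_inv_cancel₀ hd'.ne', one_mul]
    rfl
  have hgq : lam ^ q * ∑ x, |g x| ^ q ≤ ∑ x, |f x| ^ q := by
    set s := ∑ x, g x ^ 2 with hs
    have hs0 : 0 ≤ s := Finset.sum_nonneg fun x _ => sq_nonneg _
    rcases hs0.eq_or_lt with h0 | h0
    · have : ∀ x, g x = 0 := by
        intro x
        have := (Finset.sum_eq_zero_iff_of_nonneg (fun x _ => sq_nonneg (g x))).1 h0.symm x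
          (Finset.mem_univ x)
        exact pow_eq_zero_iff (two_ne_zero) |>.1 this
      simp only [this, abs_zero, Real.zero_rpow (by linarith : q ≠ 0), Finset.sum_const_zero, mul_zero]
      exact Finset.sum_nonneg fun x _ => by positivity
    · set c := Real.sqrt (n / s) with hc
      have hc2 : c ^ 2 = n / s := Real.sq_sqrt (by positivity)
      have hc0 : 0 ≤ c := Real.sqrt_nonneg _
      have hlc : lam ≤ c := by
        apply Real.le_sqrt_of_sq_le
        rw [le_div_iff₀ h0]; exact hg2
      have := hmax (c • g) (Submodule.smul_mem _ _ hgT) (by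
        simp only [Pi.smul_apply, smul_eq_mul, mul_pow]
        rw [← Finset.mul_sum, ← hs, hc2]; field_simp)
      refine le_trans ?_ this
      rw [Finset.mul_sum]
      refine Finset.sum_le_sum fun x _ => ?_
      rw [Pi.smul_apply, smul_eq_mul, abs_mul, abs_of_nonneg hc0, Real.mul_rpow hc0 (abs_nonneg _)]
      gcongr
  exact core_aux A hsymm hA dreg hd' hrow q hq lam δ η n hl hl1 hδ hn0 hη hδη f g hfg hf2 hg2 hgq
    hexp' hM

lemma top_aux (q : ℝ) (hq : 2 < q)
        (V : Type) (iV : Fintype V) (iD : DecidableEq V) (iN : Nonempty V)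
        (G : SimpleGraph V) (iG : DecidableRel G.Adj)
        (dreg : ℕ) (hd : 1 ≤ dreg) (hreg : G.IsRegularOfDegree dreg)
      (lam δ : ℝ) (hl : 0 < lam) (hl1 : lam < 1) (hδ : 0 < δ)
      (hexp : ∀ S : Finset V, S.Nonempty → (S.card : ℝ) / (Fintype.card V : ℝ) ≤ δ →
          1 - (32:ℝ) ^ (-q) * lam ^ (2 * q) < (eBoundary G S : ℝ) / ((dreg : ℝ) * S.card))
      (f : V → ℝ) (hf : f ∈ topEigenspace G dreg lam) (hf2 : ∑ x, f x ^ 2 = Fintype.card V) :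
      ∑ x, |f x| ^ q ≤ Fintype.card V * (4 / δ) ^ (q / 2) := by
  set K : Set (V → ℝ) := {g | g ∈ topEigenspace G dreg lam ∧ ∑ x, g x ^ 2 = Fintype.card V}
  have hcl : IsClosed K := by
    have h1 : IsClosed (topEigenspace G dreg lam : Set (V → ℝ)) :=
      Submodule.closed_of_finiteDimensional _
    have h2 : IsClosed {g : V → ℝ | ∑ x, g x ^ 2 = (Fintype.card V : ℝ)} :=
      isClosed_eq (by fun_prop) continuous_const
    exact h1.inter h2
  have hbd : Bornology.IsBounded K := by
    refine (Metric.isBounded_closedBall (x := (0 : V → ℝ)) (r := Real.sqrt (Fintype.card V))).subset ?_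
    rintro g ⟨_, hg⟩
    rw [mem_closedBall_zero_iff, pi_norm_le_iff_of_nonneg (Real.sqrt_nonneg _)]
    intro x
    rw [Real.norm_eq_abs]
    apply Real.abs_le_sqrt
    rw [← hg]
    exact Finset.single_le_sum (f := fun x => g x ^ 2) (fun i _ => sq_nonneg _) (Finset.mem_univ x)
  have hcp : IsCompact K := Metric.isCompact_of_isClosed_isBounded hcl hbd
  have hcont : Continuous fun g : V → ℝ => ∑ x, |g x| ^ q := by
    refine continuous_finsetSum _ fun x _ => ?_
    exact ((continuous_apply x).abs).rpow_const fun _ => Or.inr (by linarith)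
  obtain ⟨F, hFK, hF⟩ := hcp.exists_isMaxOn ⟨f, hf, hf2⟩ hcont.continuousOn
  have hFm : ∀ g ∈ topEigenspace G dreg lam, ∑ x, g x ^ 2 = Fintype.card V →
        ∑ x, |g x| ^ q ≤ ∑ x, |F x| ^ q := fun g h1 h2 => hF (show g ∈ K from ⟨h1, h2⟩)
  exact (hFm f hf hf2).trans
    (max_aux q hq V iV iD iN G iG dreg hd hreg lam δ hl hl1 hδ hexp F hFK.1 hFK.2 hFm)

/-- For every `q ∈ (2, ∞)` there is `a = a(q) > 0` such that if every
nonempty set of measure at most `δ` has expansion greater than `1 − a·λ^{2q}`, then the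
`2 → q` (expectation) norm of the projection `P_{≥λ}(G)` is at most `2/√δ`. -/
theorem stmt14 (q : ℝ) (hq : 2 < q) :
    ∃ a : ℝ, 0 < a ∧
      ∀ (V : Type) (_ : Fintype V) (_ : DecidableEq V) (_ : Nonempty V)
        (G : SimpleGraph V) (_ : DecidableRel G.Adj)
        (dreg : ℕ), 1 ≤ dreg → G.IsRegularOfDegree dreg →
      ∀ (lam δ : ℝ), 0 < lam → lam < 1 → 0 < δ →
      ∀ P : (V → ℝ) →ₗ[ℝ] (V → ℝ),
        (∀ f, P f ∈ topEigenspace G dreg lam) →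
        (∀ f ∈ topEigenspace G dreg lam, P f = f) →
        (∀ f : V → ℝ, ∀ g ∈ topEigenspace G dreg lam, ∑ x, (f x - P f x) * g x = 0) →
        (∀ S : Finset V, S.Nonempty → (S.card : ℝ) / (Fintype.card V : ℝ) ≤ δ →
          1 - a * lam ^ (2 * q) < (eBoundary G S : ℝ) / ((dreg : ℝ) * S.card)) →
        ∀ f : V → ℝ, eNorm q (P f) ≤ (2 / Real.sqrt δ) * eNorm 2 f := by

  refine ⟨(32:ℝ) ^ (-q), by positivity, ?_⟩
  intro V iV iD iN G iG dreg hd hreg lam δ hl hl1 hδ P hP1 hP2 hP3 hexp f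
  have hn0 : (0:ℝ) < Fintype.card V := by exact_mod_cast Fintype.card_pos
  set n : ℝ := (Fintype.card V : ℝ) with hn
  have key : ∀ u ∈ topEigenspace G dreg lam, eNorm q u ≤ (2 / Real.sqrt δ) * eNorm 2 u := by
    intro u hu
    set s := ∑ x, u x ^ 2 with hs
    have hs0 : 0 ≤ s := Finset.sum_nonneg fun x _ => sq_nonneg _
    have e2 : eNorm 2 u = Real.sqrt (s / n) := by
      rw [Real.sqrt_eq_rpow, eNorm]
      simp [hs, hn]
    rw [e2]
    rcases hs0.eq_or_lt with h0 | h0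
    · have : ∀ x, u x = 0 := by
        intro x
        have := (Finset.sum_eq_zero_iff_of_nonneg (fun x _ => sq_nonneg (u x))).1 h0.symm x
          (Finset.mem_univ x)
        exact pow_eq_zero_iff (two_ne_zero) |>.1 this
      have hz : eNorm q u = 0 := by
        simp only [eNorm, this, abs_zero, Real.zero_rpow (by linarith : q ≠ 0),
          Finset.sum_const_zero, zero_div]
        exact Real.zero_rpow (by simp; linarith)
      rw [hz]; positivity
    · set c := Real.sqrt (s / n) with hc
      have hc2 : c ^ 2 = s / n := Real.sq_sqrt (by positivity)
      have hc0 : 0 < c := Real.sqrt_pos.2 (by positivity)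
      have h1 := top_aux q hq V iV iD iN G iG dreg hd hreg lam δ hl hl1 hδ hexp (c⁻¹ • u)
        (Submodule.smul_mem _ _ hu) (by
          simp only [Pi.smul_apply, smul_eq_mul, mul_pow]
          rw [← Finset.mul_sum, ← hs, inv_pow, hc2]; field_simp; rfl)
      have h2 : ∑ x, |(c⁻¹ • u) x| ^ q = (c ^ q)⁻¹ * ∑ x, |u x| ^ q := by
        rw [Finset.mul_sum]
        refine Finset.sum_congr rfl fun x _ => ?_
        rw [Pi.smul_apply, smul_eq_mul, abs_mul, abs_of_pos (inv_pos.2 hc0),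
          Real.mul_rpow (inv_nonneg.2 hc0.le) (abs_nonneg _), Real.inv_rpow hc0.le]
      rw [h2, ← hn] at h1
      have hcq : 0 < c ^ q := Real.rpow_pos_of_pos hc0 q
      have e3 : (4 / δ) ^ (q / 2) = (2 / Real.sqrt δ) ^ q := by
        have : (4 / δ) = (2 / Real.sqrt δ) ^ 2 := by
          rw [div_pow, Real.sq_sqrt hδ.le]; norm_num
        rw [this, ← Real.rpow_natCast, ← Real.rpow_mul (by positivity)]
        congr 1; push_cast; ring
      rw [e3] at h1
      have h3 : (∑ x, |u x| ^ q) / n ≤ (2 / Real.sqrt δ * c) ^ q := by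
        rw [Real.mul_rpow (by positivity) hc0.le, div_le_iff₀ hn0]
        rw [inv_mul_le_iff₀ hcq] at h1
        linarith
      have h4 : 0 ≤ (∑ x, |u x| ^ q) / n :=
        div_nonneg (Finset.sum_nonneg fun x _ => by positivity) hn0.le
      calc eNorm q u = ((∑ x, |u x| ^ q) / n) ^ (1 / q) := rfl
        _ ≤ ((2 / Real.sqrt δ * c) ^ q) ^ (1 / q) := Real.rpow_le_rpow h4 h3 (by positivity)
        _ = 2 / Real.sqrt δ * c := by
          rw [← Real.rpow_mul (by positivity), mul_one_div_cancel (by linarith), Real.rpow_one]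
  refine (key (P f) (hP1 f)).trans ?_
  have h2 : eNorm 2 (P f) ≤ eNorm 2 f := by
    have h3 : ∑ x, P f x ^ 2 ≤ ∑ x, f x ^ 2 := by
      have h0 := hP3 f (P f) (hP1 f)
      have : ∑ x, f x ^ 2 = ∑ x, P f x ^ 2 + ∑ x, (f x - P f x) ^ 2
          + 2 * ∑ x, (f x - P f x) * P f x := by
        rw [Finset.mul_sum, ← Finset.sum_add_distrib, ← Finset.sum_add_distrib]
        exact Finset.sum_congr rfl fun x _ => by ring
      have : 0 ≤ ∑ x, (f x - P f x) ^ 2 := Finset.sum_nonneg fun x _ => sq_nonneg _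
      linarith
    unfold eNorm
    apply Real.rpow_le_rpow
    · positivity
    · simp only [Real.rpow_two, sq_abs]
      gcongr
    · norm_num
  gcongr
end

section
/- Let A ∈ {0,1}^{n×d}, k ≥ 1, ⟨·,·⟩ an inner product function, V ∈ {0,1}^{k×d}, and ε ∈ (0,1). Let t be an integer with t ≥ 2^{4k+14}/ε², and let α = (α_y) be a sequence of (ε/6)-approximate cluster sizes. Draw a random family C̃ = (C̃_y)_{y ∈ {0,1}^k} according to the distribution D(V,t): independently for each y ∈ {0,1}^k, if |C^V_y| < t set C̃_y = C^V_y, and otherwise let C̃_y be the multiset of t independent uniformly random samples (with replacement) from C^V_y. Let Ũ(C̃) be any matrix in {0,1}^{n×k}, depending on C̃, whose i-th row minimizes x ↦ Ẽ_{i,x} over x ∈ {0,1}^k, for each i. Then E_{C̃}[ ‖A − Ũ(C̃)·V‖₀ ] ≤ (1 + ε) · OPT_k^V. -/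
open scoped Classical

/-- The `j`-th column of a `k × d` binary matrix. -/
def colOf {k d : ℕ} (V : Fin k → Fin d → Fin 2) (j : Fin d) : Fin k → Fin 2 :=
  fun l => V l j

/-- `‖A − U·V‖₀`: the number of positions `(i,j)` where `A i j ≠ ⟨U_{i,:}, V_{:,j}⟩`. -/
noncomputable def costUV {n d k : ℕ} (A : Fin n → Fin d → Fin 2)
    (ip : (Fin k → Fin 2) → (Fin k → Fin 2) → ℝ)
    (U : Fin n → Fin k → Fin 2) (V : Fin k → Fin d → Fin 2) : ℕ :=
  Nat.card {p : Fin n × Fin d // ((A p.1 p.2 : ℕ) : ℝ) ≠ ip (U p.1) (colOf V p.2)}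

/-- `OPT_k^V`: the minimum of `‖A − U·V‖₀` over all `U`. -/
noncomputable def optV {n d k : ℕ} (A : Fin n → Fin d → Fin 2)
    (ip : (Fin k → Fin 2) → (Fin k → Fin 2) → ℝ)
    (V : Fin k → Fin d → Fin 2) : ℕ :=
  sInf {c : ℕ | ∃ U : Fin n → Fin k → Fin 2, c = costUV A ip U V}

/-- The cluster `C^V_y`: the set of columns of `V` equal to `y`. -/
def cluster {k d : ℕ} (V : Fin k → Fin d → Fin 2) (y : Fin k → Fin 2) : Finset (Fin d) :=
  Finset.univ.filter fun j => colOf V j = y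

/-- The estimated cost `Ẽ_{i,x}` of row `i` and vector `x`, given approximate cluster
sizes `α` and a family of sampled multisets `Ct`.  (Division by zero is `0`, matching
the convention that a summand is `0` when `C^V_y = ∅`.) -/
noncomputable def estCost {n d k : ℕ} (A : Fin n → Fin d → Fin 2)
    (ip : (Fin k → Fin 2) → (Fin k → Fin 2) → ℝ)
    (α : (Fin k → Fin 2) → ℕ) (Ct : (Fin k → Fin 2) → Multiset (Fin d))
    (i : Fin n) (x : Fin k → Fin 2) : ℝ :=
  ∑ y : Fin k → Fin 2, (α y : ℝ) / (Multiset.card (Ct y) : ℝ) *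
    ((Multiset.filter (fun j => ((A i j : ℕ) : ℝ) ≠ ip x y) (Ct y)).card : ℝ)

/-- The multiset family `C̃` determined by a sampling function `σ`: for clusters of
size `< t` the whole cluster, otherwise the multiset of the `t` sampled columns. -/
noncomputable def sampleFam {k d : ℕ} (V : Fin k → Fin d → Fin 2) (t : ℕ)
    (σ : (Fin k → Fin 2) → Fin t → Fin d) (y : Fin k → Fin 2) : Multiset (Fin d) :=
  if (cluster V y).card < t then (cluster V y).val
  else Multiset.map (σ y) (Finset.univ : Finset (Fin t)).val

/-- The probability of the sampling function `σ` under the distribution `D(V,t)`: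
independently for each cluster of size `≥ t`, the `t` samples are independent and
uniform in `C^V_y` (coordinates of small clusters are irrelevant for `sampleFam` and
are given the uniform distribution on all columns). -/
noncomputable def sampleWeight {k d : ℕ} (V : Fin k → Fin d → Fin 2) (t : ℕ)
    (σ : (Fin k → Fin 2) → Fin t → Fin d) : ℝ :=
  ∏ y : Fin k → Fin 2, ∏ l : Fin t,
    if t ≤ (cluster V y).card then
      (if σ y l ∈ cluster V y then (((cluster V y).card : ℕ) : ℝ)⁻¹ else 0)
    else (d : ℝ)⁻¹

section Helpers

lemma sum_prod_pi {ι κ : Type*} [Fintype ι] [DecidableEq ι] [Fintype κ]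
    (g : ι → κ → ℝ) : ∑ σ : ι → κ, ∏ i, g i (σ i) = ∏ i, ∑ a, g i a := by
  rw [Finset.prod_univ_sum, Fintype.piFinset_univ]

lemma expect_pair {ι κ : Type*} [Fintype ι] [DecidableEq ι] [Fintype κ]
    (w f : ι → κ → ℝ) (hw : ∀ i, ∑ a, w i a = 1) (hf : ∀ i, ∑ a, w i a * f i a = 0)
    (i j : ι) :
    ∑ σ : ι → κ, (∏ m, w m (σ m)) * (f i (σ i) * f j (σ j)) =
      if i = j then ∑ a, w i a * f i a ^ 2 else 0 := by
  have key : ∀ σ : ι → κ, (∏ m, w m (σ m)) * (f i (σ i) * f j (σ j)) =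
      ∏ m, (w m (σ m) * ((if m = i then f m (σ m) else 1) * (if m = j then f m (σ m) else 1))) := by
    intro σ
    rw [Finset.prod_mul_distrib, Finset.prod_mul_distrib]
    simp
  simp_rw [key]
  rw [sum_prod_pi (fun m a => w m a * ((if m = i then f m a else 1) * (if m = j then f m a else 1)))]
  split_ifs with h
  · subst h
    rw [Finset.prod_eq_single i]
    · simp [pow_two]
    · intro b _ hb
      simp [hb, hw]
    · simp
  · apply Finset.prod_eq_zero (Finset.mem_univ i)
    simp [h, hf]

lemma expect_sq {ι κ : Type*} [Fintype ι] [DecidableEq ι] [Fintype κ]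
    (w f : ι → κ → ℝ) (hw : ∀ i, ∑ a, w i a = 1) (hf : ∀ i, ∑ a, w i a * f i a = 0) :
    ∑ σ : ι → κ, (∏ m, w m (σ m)) * (∑ i, f i (σ i)) ^ 2 =
      ∑ i, ∑ a, w i a * f i a ^ 2 := by
  simp_rw [pow_two (∑ i, f i _), Finset.sum_mul_sum, Finset.mul_sum]
  rw [Finset.sum_comm]
  apply Finset.sum_congr rfl
  intro i _
  rw [Finset.sum_comm]
  simp_rw [expect_pair w f hw hf]
  simp

lemma expect_sq2 {ι τ κ : Type*} [Fintype ι] [DecidableEq ι] [Fintype τ] [DecidableEq τ]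
    [Fintype κ]
    (w f : ι → κ → ℝ) (hw : ∀ i, ∑ a, w i a = 1) (hf : ∀ i, ∑ a, w i a * f i a = 0) :
    ∑ σ : ι → τ → κ, (∏ y, ∏ l, w y (σ y l)) * (∑ y, ∑ l, f y (σ y l)) ^ 2 =
      ∑ y, (Fintype.card τ : ℝ) * ∑ a, w y a * f y a ^ 2 := by
  rw [← (Equiv.curry ι τ κ).sum_comp]
  have := expect_sq (ι := ι × τ) (fun p => w p.1) (fun p => f p.1) (fun p => hw _) (fun p => hf _)
  simp only [Fintype.sum_prod_type, Fintype.prod_prod_type] at this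
  simpa [Equiv.curry, Function.curry] using this

lemma expect_one2 {ι τ κ : Type*} [Fintype ι] [DecidableEq ι] [Fintype τ] [DecidableEq τ]
    [Fintype κ] (w : ι → κ → ℝ) (hw : ∀ i, ∑ a, w i a = 1) :
    ∑ σ : ι → τ → κ, (∏ y, ∏ l, w y (σ y l)) = 1 := by
  rw [← (Equiv.curry ι τ κ).sum_comp]
  have := sum_prod_pi (ι := ι × τ) (fun p => w p.1)
  simp only [Fintype.prod_prod_type] at this
  simpa [Equiv.curry, Function.curry, hw] using this

/-- mismatch indicator -/
noncomputable def mis {n d k : ℕ} (A : Fin n → Fin d → Fin 2)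
    (ip : (Fin k → Fin 2) → (Fin k → Fin 2) → ℝ) (i : Fin n) (x y : Fin k → Fin 2)
    (j : Fin d) : ℝ := if ((A i j : ℕ) : ℝ) ≠ ip x y then 1 else 0

/-- cost on a cluster -/
noncomputable def zc {n d k : ℕ} (A : Fin n → Fin d → Fin 2)
    (ip : (Fin k → Fin 2) → (Fin k → Fin 2) → ℝ) (V : Fin k → Fin d → Fin 2)
    (i : Fin n) (x y : Fin k → Fin 2) : ℝ := ∑ j ∈ cluster V y, mis A ip i x y j

/-- cost of a row -/
noncomputable def rc {n d k : ℕ} (A : Fin n → Fin d → Fin 2)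
    (ip : (Fin k → Fin 2) → (Fin k → Fin 2) → ℝ) (V : Fin k → Fin d → Fin 2)
    (i : Fin n) (x : Fin k → Fin 2) : ℝ := ∑ y, zc A ip V i x y

lemma zc_nonneg {n d k : ℕ} (A : Fin n → Fin d → Fin 2)
    (ip : (Fin k → Fin 2) → (Fin k → Fin 2) → ℝ) (V : Fin k → Fin d → Fin 2)
    (i : Fin n) (x y : Fin k → Fin 2) : 0 ≤ zc A ip V i x y := by
  apply Finset.sum_nonneg
  intro j _
  unfold mis
  split_ifs <;> norm_num

lemma zc_le_rc {n d k : ℕ} (A : Fin n → Fin d → Fin 2)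
    (ip : (Fin k → Fin 2) → (Fin k → Fin 2) → ℝ) (V : Fin k → Fin d → Fin 2)
    (i : Fin n) (x y : Fin k → Fin 2) : zc A ip V i x y ≤ rc A ip V i x :=
  Finset.single_le_sum (f := fun y => zc A ip V i x y) (fun y _ => zc_nonneg A ip V i x y)
    (Finset.mem_univ y)

lemma costUV_eq {n d k : ℕ} (A : Fin n → Fin d → Fin 2)
    (ip : (Fin k → Fin 2) → (Fin k → Fin 2) → ℝ)
    (U : Fin n → Fin k → Fin 2) (V : Fin k → Fin d → Fin 2) :
    (costUV A ip U V : ℝ) = ∑ i, rc A ip V i (U i) := by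
  unfold costUV rc zc
  rw [Nat.card_eq_fintype_card, Fintype.card_subtype, Finset.card_filter]
  push_cast
  rw [Fintype.sum_prod_type]
  apply Finset.sum_congr rfl
  intro i _
  unfold cluster
  simp_rw [Finset.sum_filter]
  rw [Finset.sum_comm]
  apply Finset.sum_congr rfl
  intro j _
  simp [mis]

/-- one-sample weight -/
noncomputable def wt {k d : ℕ} (V : Fin k → Fin d → Fin 2) (t : ℕ) (y : Fin k → Fin 2)
    (a : Fin d) : ℝ :=
  if t ≤ (cluster V y).card then
      (if a ∈ cluster V y then (((cluster V y).card : ℕ) : ℝ)⁻¹ else 0)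
    else (d : ℝ)⁻¹

lemma wt_sum {k d : ℕ} (V : Fin k → Fin d → Fin 2) (t : ℕ) (ht : 0 < t) (hd : 0 < d)
    (y : Fin k → Fin 2) : ∑ a, wt V t y a = 1 := by
  unfold wt
  split_ifs with h
  · have : (((cluster V y).card : ℕ) : ℝ) ≠ 0 := by
      have : 0 < (cluster V y).card := by omega
      positivity
    simp [this]
  · simp
    have : (d:ℝ) ≠ 0 := by positivity
    field_simp

lemma wt_mul_sum {k d : ℕ} (V : Fin k → Fin d → Fin 2) (t : ℕ)
    (y : Fin k → Fin 2) (h : t ≤ (cluster V y).card) (f : Fin d → ℝ) :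
    ∑ a, wt V t y a * f a = (((cluster V y).card : ℕ) : ℝ)⁻¹ * ∑ a ∈ cluster V y, f a := by
  unfold wt
  simp [h, Finset.mul_sum]

lemma wt_nonneg {k d : ℕ} (V : Fin k → Fin d → Fin 2) (t : ℕ)
    (y : Fin k → Fin 2) (a : Fin d) : 0 ≤ wt V t y a := by
  unfold wt
  split_ifs <;> positivity

lemma sampleWeight_eq {k d : ℕ} (V : Fin k → Fin d → Fin 2) (t : ℕ)
    (σ : (Fin k → Fin 2) → Fin t → Fin d) :
    sampleWeight V t σ = ∏ y, ∏ l, wt V t y (σ y l) := rfl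

/-- centered sample contribution -/
noncomputable def cf {n d k : ℕ} (A : Fin n → Fin d → Fin 2)
    (ip : (Fin k → Fin 2) → (Fin k → Fin 2) → ℝ) (V : Fin k → Fin d → Fin 2) (t : ℕ)
    (α : (Fin k → Fin 2) → ℕ) (i : Fin n) (x x' y : Fin k → Fin 2) (a : Fin d) : ℝ :=
  if t ≤ (cluster V y).card then
    ((α y : ℝ) / t) * ((mis A ip i x y a - mis A ip i x' y a) -
      (zc A ip V i x y - zc A ip V i x' y) / (cluster V y).card) else 0

/-- the mean of the estimated difference -/
noncomputable def mn {n d k : ℕ} (A : Fin n → Fin d → Fin 2)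
    (ip : (Fin k → Fin 2) → (Fin k → Fin 2) → ℝ) (V : Fin k → Fin d → Fin 2)
    (α : (Fin k → Fin 2) → ℕ) (i : Fin n) (x x' : Fin k → Fin 2) : ℝ :=
  ∑ y, (α y : ℝ) / (cluster V y).card * (zc A ip V i x y - zc A ip V i x' y)

lemma est_term {n d k : ℕ} (A : Fin n → Fin d → Fin 2)
    (ip : (Fin k → Fin 2) → (Fin k → Fin 2) → ℝ) (V : Fin k → Fin d → Fin 2) (t : ℕ)
    (α : (Fin k → Fin 2) → ℕ) (i : Fin n) (x y : Fin k → Fin 2)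
    (σ : (Fin k → Fin 2) → Fin t → Fin d) :
    (α y : ℝ) / (Multiset.card (sampleFam V t σ y) : ℝ) *
    ((Multiset.filter (fun j => ((A i j : ℕ) : ℝ) ≠ ip x y) (sampleFam V t σ y)).card : ℝ) =
    if t ≤ (cluster V y).card then (α y : ℝ) / t * ∑ l, mis A ip i x y (σ y l)
    else (α y : ℝ) / (cluster V y).card * zc A ip V i x y := by
  unfold sampleFam
  by_cases h : t ≤ (cluster V y).card
  · have h' : ¬ (cluster V y).card < t := by omega
    rw [if_neg h', if_pos h]
    simp only [Multiset.card_map, Finset.card_val, Finset.card_univ, Fintype.card_fin]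
    congr 1
    rw [Multiset.filter_map, Multiset.card_map]
    unfold mis
    rw [Finset.sum_boole]
    rfl
  · have h' : (cluster V y).card < t := by omega
    rw [if_pos h', if_neg h]
    simp only [Finset.card_val]
    congr 1
    unfold zc mis
    rw [Finset.sum_boole]
    rfl

lemma est_diff {n d k : ℕ} (A : Fin n → Fin d → Fin 2)
    (ip : (Fin k → Fin 2) → (Fin k → Fin 2) → ℝ) (V : Fin k → Fin d → Fin 2) (t : ℕ)
    (ht : 0 < t)
    (α : (Fin k → Fin 2) → ℕ) (i : Fin n) (x x' : Fin k → Fin 2)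
    (σ : (Fin k → Fin 2) → Fin t → Fin d) :
    estCost A ip α (sampleFam V t σ) i x - estCost A ip α (sampleFam V t σ) i x' =
      mn A ip V α i x x' + ∑ y, ∑ l, cf A ip V t α i x x' y (σ y l) := by
  unfold estCost mn
  rw [← Finset.sum_sub_distrib, ← Finset.sum_add_distrib]
  apply Finset.sum_congr rfl
  intro y _
  rw [est_term, est_term]
  unfold cf
  have ht' : (t:ℝ) ≠ 0 := by positivity
  split_ifs with h
  · rw [← Finset.mul_sum, Finset.sum_sub_distrib, Finset.sum_sub_distrib]
    simp only [Finset.sum_const, Finset.card_univ, Fintype.card_fin, nsmul_eq_mul]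
    field_simp
    ring
  · simp
    ring

lemma cf_mean {n d k : ℕ} (A : Fin n → Fin d → Fin 2)
    (ip : (Fin k → Fin 2) → (Fin k → Fin 2) → ℝ) (V : Fin k → Fin d → Fin 2) (t : ℕ)
    (ht : 0 < t)
    (α : (Fin k → Fin 2) → ℕ) (i : Fin n) (x x' y : Fin k → Fin 2) :
    ∑ a, wt V t y a * cf A ip V t α i x x' y a = 0 := by
  by_cases h : t ≤ (cluster V y).card
  · have hc : (((cluster V y).card : ℕ) : ℝ) ≠ 0 := by
      have : 0 < (cluster V y).card := by omega
      positivity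
    rw [wt_mul_sum V t y h]
    simp only [cf, if_pos h]
    rw [← Finset.mul_sum, Finset.sum_sub_distrib, Finset.sum_sub_distrib]
    simp only [Finset.sum_const, nsmul_eq_mul]
    rw [mul_div_cancel₀ _ hc]
    simp [zc]
  · simp [cf, h]

lemma cf_var {n d k : ℕ} (A : Fin n → Fin d → Fin 2)
    (ip : (Fin k → Fin 2) → (Fin k → Fin 2) → ℝ) (V : Fin k → Fin d → Fin 2) (t : ℕ)
    (ht : 0 < t)
    (α : (Fin k → Fin 2) → ℕ) (i : Fin n) (x x' y : Fin k → Fin 2)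
    (hα : t ≤ (cluster V y).card → (α y : ℝ) ≤ 7 / 6 * ((cluster V y).card : ℝ)) :
    (t : ℝ) * ∑ a, wt V t y a * cf A ip V t α i x x' y a ^ 2 ≤
      49 / 9 / t * (rc A ip V i x + rc A ip V i x') * zc A ip V i x' y := by
  have hz := zc_nonneg A ip V i x' y
  have hz1 := zc_nonneg A ip V i x y
  have hr := zc_le_rc A ip V i x y
  have hr' := zc_le_rc A ip V i x' y
  have ht' : (0:ℝ) < t := by positivity
  have hrhs : 0 ≤ 49 / 9 / t * (rc A ip V i x + rc A ip V i x') * zc A ip V i x' y := by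
    have : 0 ≤ rc A ip V i x + rc A ip V i x' := by linarith
    positivity
  by_cases h : t ≤ (cluster V y).card
  swap
  · simpa [cf, h] using hrhs
  have hc : (0:ℝ) < (((cluster V y).card : ℕ) : ℝ) := by
    have : 0 < (cluster V y).card := by omega
    positivity
  rw [wt_mul_sum V t y h]
  simp only [cf, if_pos h]
  by_cases hxy : ip x y = ip x' y
  · have h1 : ∀ a, mis A ip i x y a = mis A ip i x' y a := by intro a; simp [mis, hxy]
    have h2 : zc A ip V i x y = zc A ip V i x' y := by simp [zc, h1]
    simpa [h1, h2] using hrhs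
  set c : ℝ := ((cluster V y).card : ℝ) with hcdef
  set μ : ℝ := (zc A ip V i x y - zc A ip V i x' y) / c with hμ
  simp_rw [mul_pow]
  rw [← Finset.mul_sum]
  have hpt : ∀ a, (1 - (mis A ip i x y a - mis A ip i x' y a)) ^ 2 ≤ 4 * mis A ip i x' y a := by
    intro a
    unfold mis
    split_ifs with h1 h2 h2
    · norm_num
    · norm_num
    · norm_num
    · push Not at h1 h2
      exact absurd (h1.symm.trans h2) hxy
  have hcz : c ≤ zc A ip V i x y + zc A ip V i x' y := by
    unfold zc
    rw [← Finset.sum_add_distrib, hcdef, Finset.card_eq_sum_ones]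
    push_cast
    apply Finset.sum_le_sum
    intro a _
    unfold mis
    split_ifs with h1 h2 h2
    · norm_num
    · norm_num
    · norm_num
    · push Not at h1 h2
      exact absurd (h1.symm.trans h2) hxy
  have hvar : ∑ a ∈ cluster V y, ((mis A ip i x y a - mis A ip i x' y a) - μ) ^ 2 ≤
      4 * zc A ip V i x' y := by
    have e1 : ∑ a ∈ cluster V y, (mis A ip i x y a - mis A ip i x' y a) = c * μ := by
      rw [Finset.sum_sub_distrib, hμ]
      field_simp
      rfl
    have e2 : ∑ a ∈ cluster V y, (1 - (mis A ip i x y a - mis A ip i x' y a)) ^ 2 =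
        ∑ a ∈ cluster V y, ((mis A ip i x y a - mis A ip i x' y a) - μ) ^ 2 + c * (1 - μ) ^ 2 := by
      have : ∀ a ∈ cluster V y, (1 - (mis A ip i x y a - mis A ip i x' y a)) ^ 2 =
        ((mis A ip i x y a - mis A ip i x' y a) - μ) ^ 2 +
          ((1 - μ ^ 2) + (2 * μ - 2) * (mis A ip i x y a - mis A ip i x' y a)) := by
        intro a _; ring
      rw [Finset.sum_congr rfl this, Finset.sum_add_distrib, Finset.sum_add_distrib,
        ← Finset.mul_sum, e1]
      simp only [Finset.sum_const, nsmul_eq_mul]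
      rw [← hcdef]
      ring
    have e3 : ∑ a ∈ cluster V y, (1 - (mis A ip i x y a - mis A ip i x' y a)) ^ 2 ≤
        4 * zc A ip V i x' y := by
      unfold zc
      rw [Finset.mul_sum]
      exact Finset.sum_le_sum fun a _ => hpt a
    have : 0 ≤ c * (1 - μ) ^ 2 := by positivity
    linarith
  have hα2 : ((α y : ℝ)) ^ 2 ≤ 49 / 36 * c ^ 2 := by
    have := pow_le_pow_left₀ (by positivity) (hα h) 2
    calc ((α y : ℝ)) ^ 2 ≤ _ := this
      _ = _ := by ring
  calc (t:ℝ) * (c⁻¹ * (((α y : ℝ) / t) ^ 2 *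
        ∑ a ∈ cluster V y, ((mis A ip i x y a - mis A ip i x' y a) - μ) ^ 2))
      ≤ (t:ℝ) * (c⁻¹ * (((49 / 36 * c ^ 2) / t ^ 2) * (4 * zc A ip V i x' y))) := by
        rw [div_pow]; gcongr
    _ = 49 / 9 / t * c * zc A ip V i x' y := by field_simp; ring
    _ ≤ _ := by
        gcongr
        linarith

lemma mn_lower {n d k : ℕ} (A : Fin n → Fin d → Fin 2)
    (ip : (Fin k → Fin 2) → (Fin k → Fin 2) → ℝ) (V : Fin k → Fin d → Fin 2)
    (α : (Fin k → Fin 2) → ℕ) (i : Fin n) (x x' : Fin k → Fin 2) (ε : ℝ)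
    (hα : ∀ y, ((cluster V y).card : ℝ) ≤ α y ∧
      (α y : ℝ) ≤ (1 + ε / 6) * ((cluster V y).card : ℝ)) :
    rc A ip V i x - (1 + ε / 6) * rc A ip V i x' ≤ mn A ip V α i x x' := by
  unfold rc mn
  rw [Finset.mul_sum, ← Finset.sum_sub_distrib]
  apply Finset.sum_le_sum
  intro y _
  have hz := zc_nonneg A ip V i x' y
  have hz1 := zc_nonneg A ip V i x y
  rcases Nat.eq_zero_or_pos (cluster V y).card with h0 | hp
  · have : cluster V y = ∅ := Finset.card_eq_zero.mp h0
    simp [zc, this]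
  · have hc : (0:ℝ) < ((cluster V y).card : ℝ) := by positivity
    have h1 : 1 ≤ (α y : ℝ) / (cluster V y).card := by
      rw [le_div_iff₀ hc]; linarith [(hα y).1]
    have h2 : (α y : ℝ) / (cluster V y).card ≤ 1 + ε / 6 := by
      rw [div_le_iff₀ hc]; exact (hα y).2
    nlinarith

end Helpers

lemma row_bound {n d k : ℕ} (A : Fin n → Fin d → Fin 2)
    (ip : (Fin k → Fin 2) → (Fin k → Fin 2) → ℝ)
    (V : Fin k → Fin d → Fin 2) (hd : 0 < d)
    (ε : ℝ) (hε0 : 0 < ε) (hε1 : ε < 1) (t : ℕ) (ht0 : 0 < t)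
    (ht : (2 : ℝ) ^ (4 * k + 14) / ε ^ 2 ≤ (t : ℝ))
    (α : (Fin k → Fin 2) → ℕ)
    (hα : ∀ y, ((cluster V y).card : ℝ) ≤ α y ∧
      (α y : ℝ) ≤ (1 + ε / 6) * ((cluster V y).card : ℝ))
    (i : Fin n) (x' : Fin k → Fin 2)
    (u : ((Fin k → Fin 2) → Fin t → Fin d) → Fin k → Fin 2)
    (hu : ∀ σ : (Fin k → Fin 2) → Fin t → Fin d,
      (∀ y l, t ≤ (cluster V y).card → σ y l ∈ cluster V y) →
        estCost A ip α (sampleFam V t σ) i (u σ) ≤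
          estCost A ip α (sampleFam V t σ) i x') :
    ∑ σ, sampleWeight V t σ * rc A ip V i (u σ) ≤ (1 + ε) * rc A ip V i x' := by
  set E := rc A ip V i x' with hE
  have hE0 : 0 ≤ E := Finset.sum_nonneg fun y _ => zc_nonneg A ip V i x' y
  have ht' : (0:ℝ) < t := by positivity
  let S : (Fin k → Fin 2) → ((Fin k → Fin 2) → Fin t → Fin d) → ℝ :=
    fun x σ => ∑ y, ∑ l, cf A ip V t α i x x' y (σ y l)
  let c : (Fin k → Fin 2) → ℝ := fun x =>
    if ε / 3 * E < rc A ip V i x - E then 4 / (rc A ip V i x - E) else 0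
  have hc0 : ∀ x, 0 ≤ c x := by
    intro x
    simp only [c]
    split_ifs with h
    · have : 0 < rc A ip V i x - E := lt_of_le_of_lt (by positivity) h
      positivity
    · exact le_rfl
  have hsw0 : ∀ σ, 0 ≤ sampleWeight V t σ := fun σ => by
    rw [sampleWeight_eq]
    exact Finset.prod_nonneg fun y _ => Finset.prod_nonneg fun l _ => wt_nonneg _ _ _ _
  have hpt : ∀ σ, sampleWeight V t σ * rc A ip V i (u σ) ≤
      sampleWeight V t σ * ((1 + ε / 3) * E) + ∑ x, c x * (sampleWeight V t σ * S x σ ^ 2) := by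
    intro σ
    by_cases hv : ∀ y l, t ≤ (cluster V y).card → σ y l ∈ cluster V y
    · have h1 := hu σ hv
      have h2 := est_diff A ip V t ht0 α i (u σ) x' σ
      have h3 := mn_lower A ip V α i (u σ) x' ε hα
      have h4 : rc A ip V i (u σ) ≤ (1 + ε / 3) * E + c (u σ) * S (u σ) σ ^ 2 := by
        simp only [c]
        split_ifs with h
        · have hD : 0 < rc A ip V i (u σ) - E := lt_of_le_of_lt (by positivity) h
          set D := rc A ip V i (u σ) - E with hDdef
          have hS : D / 2 ≤ - S (u σ) σ := by
            simp only [S]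
            rw [← hE] at h3
            nlinarith
          have hS2 : D ^ 2 / 4 ≤ S (u σ) σ ^ 2 := by nlinarith
          have : D ≤ 4 / D * S (u σ) σ ^ 2 := by
            calc D = 4 / D * (D ^ 2 / 4) := by field_simp
              _ ≤ _ := by gcongr
          nlinarith
        · nlinarith
      have h5 : c (u σ) * S (u σ) σ ^ 2 ≤ ∑ x, c x * S x σ ^ 2 :=
        Finset.single_le_sum (f := fun x => c x * S x σ ^ 2)
          (fun x _ => mul_nonneg (hc0 x) (sq_nonneg _)) (Finset.mem_univ _)
      calc _ ≤ sampleWeight V t σ * ((1 + ε / 3) * E + ∑ x, c x * S x σ ^ 2) :=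
            mul_le_mul_of_nonneg_left (h4.trans (by linarith)) (hsw0 σ)
        _ = _ := by
            rw [mul_add, Finset.mul_sum]
            congr 1
            exact Finset.sum_congr rfl fun x _ => by ring
    · push Not at hv
      obtain ⟨y, l, hy, hl⟩ := hv
      have : sampleWeight V t σ = 0 := by
        rw [sampleWeight_eq]
        apply Finset.prod_eq_zero (Finset.mem_univ y)
        apply Finset.prod_eq_zero (Finset.mem_univ l)
        simp [wt, hy, hl]
      simp [this]
  have hα7 : ∀ y, (α y : ℝ) ≤ 7 / 6 * ((cluster V y).card : ℝ) := fun y =>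
    (hα y).2.trans (by gcongr; linarith)
  have hS : ∀ x, ∑ σ, sampleWeight V t σ * S x σ ^ 2 ≤
      49 / 9 / t * (rc A ip V i x + E) * E := by
    intro x
    simp_rw [sampleWeight_eq]
    rw [expect_sq2 (wt V t) (cf A ip V t α i x x') (wt_sum V t ht0 hd)
      (cf_mean A ip V t ht0 α i x x')]
    rw [Fintype.card_fin]
    calc _ ≤ ∑ y, 49 / 9 / t * (rc A ip V i x + E) * zc A ip V i x' y :=
          Finset.sum_le_sum fun y _ => cf_var A ip V t ht0 α i x x' y fun _ => hα7 y
      _ = _ := by rw [← Finset.mul_sum]; rfl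
  have hx : ∀ x, c x * ∑ σ, sampleWeight V t σ * S x σ ^ 2 ≤ ε / 2 ^ k / 2 * E := by
    intro x
    refine (mul_le_mul_of_nonneg_left (hS x) (hc0 x)).trans ?_
    simp only [c]
    split_ifs with h
    · have hD : 0 < rc A ip V i x - E := lt_of_le_of_lt (by positivity) h
      have e : rc A ip V i x + E = (rc A ip V i x - E) + 2 * E := by ring
      rw [e]
      set D := rc A ip V i x - E
      have h1 : D + 2 * E ≤ 7 / ε * D := by
        rw [div_mul_eq_mul_div, le_div_iff₀ hε0]
        nlinarith
      have h2 : (1:ℝ) / t ≤ ε ^ 2 / 2 ^ (4 * k + 14) := by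
        rw [div_le_div_iff₀ ht' (by positivity)]
        rw [div_le_iff₀ (by positivity)] at ht
        linarith
      have h3 : (1:ℝ) / 2 ^ (4 * k + 14) ≤ 1 / 2 ^ (k + 14) := by
        gcongr
        · norm_num
        · omega
      calc 4 / D * (49 / 9 / t * (D + 2 * E) * E)
          ≤ 4 / D * (49 / 9 / t * (7 / ε * D) * E) := by gcongr
        _ = 1372 / 9 / ε * E * (1 / t) := by field_simp; ring
        _ ≤ 1372 / 9 / ε * E * (ε ^ 2 / 2 ^ (4 * k + 14)) := by gcongr
        _ = 1372 / 9 * ε * E * (1 / 2 ^ (4 * k + 14)) := by field_simp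
        _ ≤ 1372 / 9 * ε * E * (1 / 2 ^ (k + 14)) := by gcongr
        _ = (1372 / 9 / 2 ^ 13) * (ε / 2 ^ k / 2 * E) := by rw [pow_add]; field_simp
        _ ≤ 1 * (ε / 2 ^ k / 2 * E) := by gcongr; norm_num
        _ = _ := one_mul _
    · rw [zero_mul]; positivity
  calc ∑ σ, sampleWeight V t σ * rc A ip V i (u σ)
      ≤ ∑ σ, (sampleWeight V t σ * ((1 + ε / 3) * E) +
          ∑ x, c x * (sampleWeight V t σ * S x σ ^ 2)) := Finset.sum_le_sum fun σ _ => hpt σ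
    _ = (1 + ε / 3) * E + ∑ x, c x * ∑ σ, sampleWeight V t σ * S x σ ^ 2 := by
        rw [Finset.sum_add_distrib, ← Finset.sum_mul, Finset.sum_comm]
        congr 1
        · have := expect_one2 (τ := Fin t) (wt V t) (wt_sum V t ht0 hd)
          simp_rw [sampleWeight_eq]
          rw [this, one_mul]
        · exact Finset.sum_congr rfl fun x _ => by rw [Finset.mul_sum]
    _ ≤ (1 + ε / 3) * E + ∑ x : Fin k → Fin 2, ε / 2 ^ k / 2 * E := by
        exact add_le_add le_rfl (Finset.sum_le_sum fun x _ => hx x)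
    _ = (1 + ε / 3) * E + ε / 2 * E := by
        simp
        field_simp
    _ ≤ (1 + ε) * E := by nlinarith [mul_nonneg hε0.le hE0]

/-- The sampling theorem: for `t ≥ 2^{4k+14}/ε²`, `(ε/6)`-approximate
cluster sizes `α`, and `C̃` drawn from `D(V,t)`, any matrix `Ũ(C̃)` whose rows minimize
the estimated cost satisfies `E[‖A − Ũ(C̃)·V‖₀] ≤ (1+ε)·OPT_k^V`. -/
theorem stmt19 {n d k : ℕ} (hk : 1 ≤ k) (A : Fin n → Fin d → Fin 2)
    (ip : (Fin k → Fin 2) → (Fin k → Fin 2) → ℝ)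
    (V : Fin k → Fin d → Fin 2)
    (ε : ℝ) (hε0 : 0 < ε) (hε1 : ε < 1) (t : ℕ)
    (ht : (2 : ℝ) ^ (4 * k + 14) / ε ^ 2 ≤ (t : ℝ))
    (α : (Fin k → Fin 2) → ℕ)
    (hα : ∀ y : Fin k → Fin 2,
      ((cluster V y).card < t → α y = (cluster V y).card) ∧
      (t ≤ (cluster V y).card →
        (cluster V y).card ≤ α y ∧ (α y : ℝ) ≤ (1 + ε / 6) * ((cluster V y).card : ℝ)))
    (Ut : ((Fin k → Fin 2) → Multiset (Fin d)) → Fin n → Fin k → Fin 2)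
    (hUt : ∀ σ : (Fin k → Fin 2) → Fin t → Fin d,
      (∀ y l, t ≤ (cluster V y).card → σ y l ∈ cluster V y) →
      ∀ (i : Fin n) (x : Fin k → Fin 2),
        estCost A ip α (sampleFam V t σ) i (Ut (sampleFam V t σ) i) ≤
          estCost A ip α (sampleFam V t σ) i x) :
    ∑ σ : (Fin k → Fin 2) → Fin t → Fin d,
        sampleWeight V t σ * (costUV A ip (Ut (sampleFam V t σ)) V : ℝ) ≤
      (1 + ε) * (optV A ip V : ℝ) := by
  have ht0 : 0 < t := by
    have h : (0:ℝ) < t := lt_of_lt_of_le (by positivity) ht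
    exact_mod_cast h
  have hopt : ∃ U : Fin n → Fin k → Fin 2, optV A ip V = costUV A ip U V := by
    have hne : {c : ℕ | ∃ U : Fin n → Fin k → Fin 2, c = costUV A ip U V}.Nonempty :=
      ⟨_, fun _ _ => 0, rfl⟩
    exact Nat.sInf_mem hne
  obtain ⟨U, hU⟩ := hopt
  rcases Nat.eq_zero_or_pos d with hd | hd
  · subst hd
    have hnn : (0:ℝ) ≤ (1 + ε) * (optV A ip V : ℝ) := by positivity
    refine le_trans (le_of_eq ?_) hnn
    apply Finset.sum_eq_zero
    intro σ _
    exact (σ (fun _ => 0) ⟨0, ht0⟩).elim0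
  have hα' : ∀ y, ((cluster V y).card : ℝ) ≤ α y ∧
      (α y : ℝ) ≤ (1 + ε / 6) * ((cluster V y).card : ℝ) := by
    intro y
    by_cases h : t ≤ (cluster V y).card
    · exact ⟨by exact_mod_cast ((hα y).2 h).1, ((hα y).2 h).2⟩
    · rw [(hα y).1 (by omega)]
      refine ⟨le_rfl, ?_⟩
      have : (0:ℝ) ≤ ((cluster V y).card : ℝ) := by positivity
      nlinarith [mul_nonneg hε0.le this]
  rw [hU]
  simp_rw [costUV_eq, Finset.mul_sum]
  rw [Finset.sum_comm]
  apply Finset.sum_le_sum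
  intro i _
  exact row_bound A ip V hd ε hε0 hε1 t ht0 ht α hα' i (U i)
    (fun σ => Ut (sampleFam V t σ) i) (fun σ hσ => hUt σ hσ i (U i))
end
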